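/- arXiv:1507.01283 — 2 statements merged into one kernel-verified Lean document; each statement's English description precedes it below -/
import Mathlib

section
/- For every integer n ≥ 1 and every prime power q, the cardinality of Res_n(F_q) equals q^n · Σ_{(a,b,c)} μ(a) · q^{b−1} · gcd(c, q−1), where the sum ranges over all ordered triples (a,b,c) of positive integers with a·b·c = n. -/
/-!
For monic `φ`, `Res(φ, ψ)` is the norm of the class of `ψ` from `F[X]/φ` to `F`, and every class
contains exactly one monic `ψ` of degree `deg φ`; so one counts the kernel of the norm
`(F[X]/φ)ˣ → Fˣ`. If `φ = ∏ pᵢ ^ eᵢ`, the range of this norm is generated by the `eᵢ`-th powers, so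
for `d ∣ q - 1` its index `e` is divisible by `d` exactly when `φ` is a `d`-th power. Since
`(q - 1) * |ker| = e * |(F[X]/φ)ˣ|`, expanding `e = ∑_{d ∣ e} totient d` turns the sum
over `φ` into sums of `|(F[X]/η ^ d)ˣ|` over all monic `η` of degree `n / d`. These are counts of
coprime pairs of monic polynomials, which follow by splitting the monic gcd off an arbitrary pair.
The resulting sum over `d ∣ gcd(n, q - 1)` is the stated one because `c ↦ gcd(c, q - 1)` is the
divisor sum of the totient function restricted to `d ∣ q - 1`.
-/

open Polynomial

/-- The resultant `Res(φ, ψ)` of a monic polynomial `φ` and a polynomial `ψ`, computed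
(inside the algebraic closure) as the product `∏ ψ(αᵢ)` over the roots `αᵢ` of `φ`,
counted with multiplicity. -/
noncomputable def resultantAC {k : Type*} [Field k] (φ ψ : k[X]) : AlgebraicClosure k :=
  (((φ.map (algebraMap k (AlgebraicClosure k))).roots).map
    fun α => (ψ.map (algebraMap k (AlgebraicClosure k))).eval α).prod

/-- `Res_n(k)`: the set of pairs `(φ, ψ)` of monic degree-`n` polynomials over `k`
with `Res(φ, ψ) = 1`. -/
def ResPairs (k : Type*) [Field k] (n : ℕ) : Set (k[X] × k[X]) :=
  {p | p.1.Monic ∧ p.1.natDegree = n ∧ p.2.Monic ∧ p.2.natDegree = n ∧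
    resultantAC p.1 p.2 = 1}

theorem det_aeval_eq_prod_roots_charpoly {R ι : Type*} [CommRing R] [IsDomain R] [Fintype ι]
    [DecidableEq ι] {A : Matrix ι ι R} (hA : A.charpoly.Splits) {p : R[X]} (hp : p.Splits) :
    (aeval A p).det = (A.charpoly.roots.map fun α => p.eval α).prod := by
  have card_roots : A.charpoly.roots.card = Fintype.card ι := by
    rw [← hA.natDegree_eq_card_roots, A.charpoly_natDegree_eq_dim]
  induction hp using Submonoid.closure_induction with
  | one => simp
  | mul p₁ p₂ _ _ ih₁ ih₂ => simp [ih₁, ih₂, Multiset.prod_map_mul]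
  | mem p hp =>
    obtain ⟨a, rfl⟩ | ⟨a, rfl⟩ := hp
    · simp [Matrix.algebraMap_eq_diagonal, card_roots]
    · have aeval_eq : aeval A (X + C a) = -(Matrix.scalar ι (-a) - A) := by
        rw [map_add, aeval_X, aeval_C, map_neg, neg_sub, sub_neg_eq_add]
        rfl
      rw [aeval_eq, Matrix.det_neg, ← Matrix.eval_charpoly,
        hA.eval_eq_prod_roots_of_monic A.charpoly_monic, ← card_roots]
      simpa [Function.comp_def, add_comm] using
        (Multiset.prod_map_neg (A.charpoly.roots.map fun α => -a - α)).symm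

section

variable {F : Type*} [Field F] {φ : F[X]}

theorem algebraMap_norm_mk (L : Type*) [Field L] [IsAlgClosed L] [Algebra F L]
    (hφ : φ.Monic) (ψ : F[X]) :
    algebraMap F L (Algebra.norm F (AdjoinRoot.mk φ ψ)) =
      ((φ.aroots L).map fun α => aeval α ψ).prod := by
  set b := AdjoinRoot.powerBasis hφ.ne_zero with hb
  set A : Matrix _ _ L := (Algebra.leftMulMatrix b.basis b.gen).map (algebraMap F L) with hA
  have charpoly_eq : A.charpoly = φ.map (algebraMap F L) := by
    rw [hA, Matrix.charpoly_map, charpoly_leftMulMatrix,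
      AdjoinRoot.minpoly_powerBasis_gen_of_monic hφ]
  have norm_eq : algebraMap F L (Algebra.norm F (AdjoinRoot.mk φ ψ)) =
      (aeval A (ψ.map (algebraMap F L))).det := by
    rw [Algebra.norm_eq_matrix_det b.basis, RingHom.map_det, ← AdjoinRoot.aeval_eq,
      ← AdjoinRoot.powerBasis_gen hφ.ne_zero, ← hb, ← aeval_algHom_apply, aeval_map_algebraMap]
    exact congrArg Matrix.det (aeval_algHom_apply (Algebra.ofId F L).mapMatrix _ ψ).symm
  rw [norm_eq, det_aeval_eq_prod_roots_charpoly (IsAlgClosed.splits _) (IsAlgClosed.splits _),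
    charpoly_eq]
  simp [aroots_def]

theorem resultantAC_eq_algebraMap_norm (hφ : φ.Monic) (ψ : F[X]) :
    resultantAC φ ψ = algebraMap F _ (Algebra.norm F (AdjoinRoot.mk φ ψ)) := by
  simp [resultantAC, algebraMap_norm_mk (AlgebraicClosure F) hφ, aroots_def]

theorem resultantAC_eq_one_iff (hφ : φ.Monic) {ψ : F[X]} :
    resultantAC φ ψ = 1 ↔ Algebra.norm F (AdjoinRoot.mk φ ψ) = 1 := by
  rw [resultantAC_eq_algebraMap_norm hφ,
    map_eq_one_iff _ (algebraMap F (AlgebraicClosure F)).injective]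

theorem norm_mk_mul_left {φ' : F[X]} (hφ : φ.Monic) (hφ' : φ'.Monic) (ψ : F[X]) :
    Algebra.norm F (AdjoinRoot.mk (φ * φ') ψ) =
      Algebra.norm F (AdjoinRoot.mk φ ψ) * Algebra.norm F (AdjoinRoot.mk φ' ψ) := by
  apply (algebraMap F (AlgebraicClosure F)).injective
  simp [algebraMap_norm_mk, hφ, hφ', hφ.mul hφ', aroots_mul (mul_ne_zero hφ.ne_zero hφ'.ne_zero)]

theorem norm_mk_pow_left (hφ : φ.Monic) (d : ℕ) (ψ : F[X]) :
    Algebra.norm F (AdjoinRoot.mk (φ ^ d) ψ) = Algebra.norm F (AdjoinRoot.mk φ ψ) ^ d := by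
  apply (algebraMap F (AlgebraicClosure F)).injective
  simp [algebraMap_norm_mk, hφ, hφ.pow d, Multiset.map_nsmul, Multiset.prod_nsmul]

theorem isUnit_algebraNorm_iff {R A : Type*} [CommRing R] [CommRing A] [Algebra R A]
    [Module.Free R A] [Module.Finite R A] {x : A} : IsUnit (Algebra.norm R x) ↔ IsUnit x := by
  rw [Algebra.norm_apply, ← LinearMap.isUnit_iff_isUnit_det]
  exact Algebra.lmul_isUnit_iff

theorem isUnit_mk_iff_isCoprime {R : Type*} [CommRing R] {f g : R[X]} :
    IsUnit (AdjoinRoot.mk f g) ↔ IsCoprime f g := by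
  constructor
  · intro h
    obtain ⟨y, hy⟩ := h.exists_right_inv
    obtain ⟨b, rfl⟩ := AdjoinRoot.mk_surjective y
    rw [← map_mul, ← map_one (AdjoinRoot.mk f), AdjoinRoot.mk_eq_mk] at hy
    obtain ⟨c, hc⟩ := hy
    exact ⟨-c, b, by linear_combination hc⟩
  · rintro ⟨c, b, h⟩
    refine IsUnit.of_mul_eq_one (AdjoinRoot.mk f b) ?_
    rw [← map_mul, ← map_one (AdjoinRoot.mk f), AdjoinRoot.mk_eq_mk]
    exact ⟨-c, by linear_combination h⟩

/-- The norm `(F[X]/φ)ˣ → Fˣ`; on the class of `ψ` it is `Res(φ, ψ)` when `φ` is monic. -/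
noncomputable def normUnits (φ : F[X]) : (AdjoinRoot φ)ˣ →* Fˣ :=
  Units.map (Algebra.norm F)

theorem mem_range_normUnits_iff (hφ : φ.Monic) {x : Fˣ} :
    x ∈ (normUnits φ).range ↔ ∃ ψ : F[X], Algebra.norm F (AdjoinRoot.mk φ ψ) = x := by
  constructor
  · rintro ⟨u, rfl⟩
    obtain ⟨ψ, hψ⟩ := AdjoinRoot.mk_surjective (u : AdjoinRoot φ)
    exact ⟨ψ, congrArg _ hψ⟩
  · rintro ⟨ψ, hψ⟩
    have := hφ.free_adjoinRoot
    have := hφ.finite_adjoinRoot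
    obtain ⟨u, hu⟩ := isUnit_algebraNorm_iff.mp (hψ ▸ x.isUnit)
    exact ⟨u, Units.ext ((congrArg _ hu).trans hψ)⟩

theorem range_normUnits_pow_le (hφ : φ.Monic) {d : ℕ} (hd : d ≠ 0) :
    (normUnits (φ ^ d)).range ≤ (powMonoidHom d : Fˣ →* Fˣ).range := by
  intro x hx
  obtain ⟨ψ, hψ⟩ := (mem_range_normUnits_iff (hφ.pow d)).mp hx
  rw [norm_mk_pow_left hφ] at hψ
  obtain ⟨y, hy⟩ := (isUnit_pow_iff hd).mp (hψ ▸ x.isUnit)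
  exact ⟨y, Units.ext (by simp [hy, hψ])⟩

theorem normUnits_surjective_of_irreducible [Finite F] {p : F[X]} (hp : Irreducible p)
    (hm : p.Monic) :
    Function.Surjective (normUnits p) := by
  have := Fact.mk hp
  have := hm.finite_adjoinRoot
  have := Module.finite_of_finite F (M := AdjoinRoot p)
  exact FiniteField.unitsMap_norm_surjective F (AdjoinRoot p)

/-- By the Chinese remainder theorem a residue modulo `p` lifts to a polynomial that is `1` modulo
the `p`-free part of `φ`. -/
theorem range_powMonoidHom_multiplicity_le [Finite F] {p : F[X]} (hφ : φ.Monic)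
    (hp : Irreducible p) (hm : p.Monic) :
    (powMonoidHom (multiplicity p φ) : Fˣ →* Fˣ).range ≤ (normUnits φ).range := by
  obtain ⟨φ', hφ_eq, hdvd⟩ :=
    (FiniteMultiplicity.of_not_isUnit hp.not_isUnit hφ.ne_zero).exists_eq_pow_mul_and_not_dvd
  set e := multiplicity p φ
  have hφ' : φ'.Monic := (hm.pow e).of_mul_monic_left (hφ_eq ▸ hφ)
  obtain ⟨a, b, hab⟩ : IsCoprime p φ' := hp.coprime_iff_not_dvd.mpr hdvd
  rintro _ ⟨x, rfl⟩
  obtain ⟨u, hu⟩ := (mem_range_normUnits_iff hm).mp (normUnits_surjective_of_irreducible hp hm x)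
  set s := 1 + b * φ' * (u - 1)
  have mk_p : AdjoinRoot.mk p s = AdjoinRoot.mk p u :=
    AdjoinRoot.mk_eq_mk.mpr ⟨a * (1 - u), by linear_combination (u - 1) * hab⟩
  have mk_φ' : AdjoinRoot.mk φ' s = 1 :=
    AdjoinRoot.mk_eq_mk.mpr ⟨b * (u - 1), by ring⟩
  refine (mem_range_normUnits_iff hφ).mpr ⟨s, ?_⟩
  rw [hφ_eq, norm_mk_mul_left (hm.pow e) hφ', norm_mk_pow_left hm, mk_p, mk_φ', hu]
  simp

theorem index_range_normUnits_dvd_multiplicity [Finite F] {p : F[X]} (hφ : φ.Monic)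
    (hp : Irreducible p) (hm : p.Monic) :
    (normUnits φ).range.index ∣ multiplicity p φ := by
  have h := Subgroup.index_dvd_of_le (range_powMonoidHom_multiplicity_le hφ hp hm)
  rw [IsCyclic.index_powMonoidHom_range] at h
  exact h.trans (Nat.gcd_dvd_right _ _)

theorem exists_monic_pow_eq_of_dvd_multiplicity {d : ℕ} (hφ : φ.Monic)
    (h : ∀ p : F[X], Irreducible p → p.Monic → d ∣ multiplicity p φ) :
    ∃ η : F[X], η.Monic ∧ η ^ d = φ := by
  classical
  have mem_factors {p : F[X]} := Polynomial.mem_normalizedFactors_iff (p := p) hφ.ne_zero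
  obtain ⟨s, hs⟩ := (UniqueFactorizationMonoid.normalizedFactors φ).exists_smul_of_dvd_count
    (k := d) fun p hp => by
      obtain ⟨hi, hm, -⟩ := mem_factors.mp hp
      have := h p hi hm
      rwa [UniqueFactorizationMonoid.multiplicity_eq_count_normalizedFactors hi hφ.ne_zero,
        hm.normalize_eq_self] at this
  have prod_pow : s.prod ^ d = φ := by
    rw [← Multiset.prod_nsmul, ← hs, UniqueFactorizationMonoid.prod_normalizedFactors_eq
      hφ.ne_zero, hφ.normalize_eq_self]
  obtain rfl | hd := eq_or_ne d 0
  · exact ⟨1, monic_one, by simpa using prod_pow⟩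
  refine ⟨s.prod, ?_, prod_pow⟩
  have := monic_multiset_prod_of_monic s id fun p hp => by
    refine (mem_factors.mp ?_).2.1
    rw [hs]
    exact Multiset.mem_nsmul.mpr ⟨hd, hp⟩
  simpa using this

theorem dvd_index_range_normUnits_iff [Finite F] {d : ℕ} (hφ : φ.Monic)
    (hd : d ∣ Nat.card Fˣ) :
    d ∣ (normUnits φ).range.index ↔ ∃ η : F[X], η.Monic ∧ η ^ d = φ := by
  refine ⟨fun h => exists_monic_pow_eq_of_dvd_multiplicity hφ fun p hp hm =>
    h.trans (index_range_normUnits_dvd_multiplicity hφ hp hm), ?_⟩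
  rintro ⟨η, hη, rfl⟩
  have hd₀ : d ≠ 0 := ne_zero_of_dvd_ne_zero Nat.card_pos.ne' hd
  have h := Subgroup.index_dvd_of_le (range_normUnits_pow_le hη hd₀)
  rwa [IsCyclic.index_powMonoidHom_range, Nat.gcd_eq_right hd] at h

open Classical in
theorem card_units_mul_card_ker_normUnits [Finite F] (hφ : φ.Monic) :
    Nat.card Fˣ * Nat.card (normUnits φ).ker =
      ∑ d ∈ (φ.natDegree.gcd (Nat.card Fˣ)).divisors with ∃ η : F[X], η.Monic ∧ η ^ d = φ,
        d.totient * Nat.card (AdjoinRoot φ)ˣ := by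
  set e := (normUnits φ).range.index with he
  have card_range : Nat.card (normUnits φ).range * e = Nat.card Fˣ := Subgroup.card_mul_index _
  have card_ker : Nat.card (normUnits φ).ker * Nat.card (normUnits φ).range =
      Nat.card (AdjoinRoot φ)ˣ := by
    rw [← Subgroup.index_ker, Subgroup.card_mul_index]
  have he₀ : e ≠ 0 := Subgroup.FiniteIndex.index_ne_zero
  have he_dvd : e ∣ Nat.card Fˣ := Subgroup.index_dvd_card _
  have divisors_eq : (φ.natDegree.gcd (Nat.card Fˣ)).divisors.filter
      (fun d => ∃ η : F[X], η.Monic ∧ η ^ d = φ) = e.divisors := by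
    ext d
    simp only [Finset.mem_filter, Nat.mem_divisors, Nat.dvd_gcd_iff]
    constructor
    · rintro ⟨⟨⟨-, hd⟩, -⟩, h⟩
      exact ⟨(dvd_index_range_normUnits_iff hφ hd).mpr h, he₀⟩
    · rintro ⟨hd, -⟩
      have hd' := hd.trans he_dvd
      obtain ⟨η, hη, rfl⟩ := (dvd_index_range_normUnits_iff hφ hd').mp hd
      have hgcd : (η ^ d).natDegree.gcd (Nat.card Fˣ) ≠ 0 := Nat.gcd_ne_zero_right Nat.card_pos.ne'
      exact ⟨⟨⟨by simp [hη.natDegree_pow], hd'⟩, hgcd⟩, η, hη, rfl⟩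
  rw [divisors_eq, ← Finset.sum_mul, Nat.sum_totient, ← card_range, ← card_ker]
  ring

section MonicDegreeEq

variable {R : Type*} [CommRing R] [Nontrivial R]

theorem card_monicDegreeEq [Finite R] (n : ℕ) : Nat.card (MonicDegreeEq R n) = Nat.card R ^ n := by
  have e : MonicDegreeEq R n ≃ {p : R[X] // p.Monic ∧ p.natDegree = n} :=
    Equiv.subtypeEquivRight fun p =>
      ⟨fun h => ⟨MonicDegreeEq.monic ⟨p, h⟩, MonicDegreeEq.natDegree ⟨p, h⟩⟩,
        fun h => (MonicDegreeEq.mk p h.1 h.2).2⟩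
  rw [Nat.card_congr (e.trans ((monicEquivDegreeLT n).trans (degreeLTEquiv R n).toEquiv)),
    Nat.card_fun, Nat.card_fin]

instance [Finite R] (n : ℕ) : Finite (MonicDegreeEq R n) :=
  Nat.finite_of_card_ne_zero (card_monicDegreeEq (R := R) n ▸ pow_ne_zero _ Nat.card_pos.ne')

theorem degree_modByMonicHom_lt {f : R[X]} (hf : f.Monic) (x : AdjoinRoot f) :
    (AdjoinRoot.modByMonicHom hf x).degree < f.degree := by
  obtain ⟨g, rfl⟩ := AdjoinRoot.mk_surjective x
  exact degree_modByMonic_lt g hf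

/-- Division by a monic `φ` of degree `m`, as a bijection sending a monic polynomial of degree
`m + k` to its residue class modulo `φ` and its monic quotient of degree `k`. -/
noncomputable def monicDivModEquiv {m : ℕ} (φ : MonicDegreeEq R m) (k : ℕ) :
    MonicDegreeEq R (m + k) ≃ AdjoinRoot φ.1 × MonicDegreeEq R k where
  toFun ψ :=
    have degree_le : φ.1.degree ≤ ψ.1.degree := by
      rw [φ.degree, ψ.degree]
      exact_mod_cast m.le_add_right k
    (AdjoinRoot.mk φ.1 ψ.1, .mk (ψ.1 /ₘ φ.1)
      ((leadingCoeff_divByMonic_of_monic φ.monic degree_le).trans ψ.monic)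
      (by simp [natDegree_divByMonic _ φ.monic]))
  invFun x :=
    have degree_lt : (AdjoinRoot.modByMonicHom φ.monic x.1).degree < (φ.1 * x.2.1).degree := by
      refine (degree_modByMonicHom_lt φ.monic x.1).trans_le ?_
      simp [φ.monic.degree_mul_comm, φ.monic.degree_mul, ← Nat.cast_add]
    .mk (φ.1 * x.2.1 + AdjoinRoot.modByMonicHom φ.monic x.1)
      ((φ.monic.mul x.2.monic).add_of_left degree_lt) (by
        rw [natDegree_add_eq_left_of_degree_lt degree_lt, φ.monic.natDegree_mul x.2.monic,
          φ.natDegree, x.2.natDegree])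
  left_inv ψ := Subtype.ext <| (add_comm _ _).trans (modByMonic_add_div ψ.1 φ.1)
  right_inv x := by
    refine Prod.ext ?_ (Subtype.ext ?_)
    · simp [AdjoinRoot.mk_leftInverse φ.monic x.1]
    · exact (div_modByMonic_unique _ _ φ.monic
        ⟨add_comm _ _, degree_modByMonicHom_lt φ.monic x.1⟩).1

theorem card_monicDegreeEq_mk [Finite R] {m : ℕ} (φ : MonicDegreeEq R m) (k : ℕ)
    (P : AdjoinRoot φ.1 → Prop) :
    Nat.card {ψ : MonicDegreeEq R (m + k) // P (AdjoinRoot.mk φ.1 ψ.1)} =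
      Nat.card {x // P x} * Nat.card R ^ k := by
  rw [← card_monicDegreeEq, ← Nat.card_prod]
  exact Nat.card_congr <| ((monicDivModEquiv φ k).subtypeEquiv fun _ => Iff.rfl).trans
    Equiv.prodSubtypeFstEquivSubtypeProd

theorem card_isCoprime_monicDegreeEq [Finite R] {m : ℕ} (φ : MonicDegreeEq R m) (k : ℕ) :
    Nat.card {ψ : MonicDegreeEq R (m + k) // IsCoprime φ.1 ψ.1} =
      Nat.card (AdjoinRoot φ.1)ˣ * Nat.card R ^ k := by
  simp_rw [← isUnit_mk_iff_isCoprime]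
  rw [card_monicDegreeEq_mk φ k IsUnit,
    Nat.card_congr (Submonoid.unitsTypeEquivIsUnitSubmonoid (M := AdjoinRoot φ.1)).toEquiv]
  rfl

theorem card_units_adjoinRoot_pow_succ [Finite R] {m : ℕ} (η : MonicDegreeEq R m) (d : ℕ) :
    Nat.card (AdjoinRoot (η.1 ^ (d + 1)))ˣ =
      Nat.card (AdjoinRoot η.1)ˣ * Nat.card R ^ (d * m) := by
  have natDegree_pow : (η.1 ^ (d + 1)).natDegree = m + d * m := by
    rw [η.monic.natDegree_pow, η.natDegree, Nat.succ_mul, add_comm]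
  have card_pow := card_isCoprime_monicDegreeEq
    (.mk (η.1 ^ (d + 1)) (η.monic.pow _) natDegree_pow) 0
  rw [← card_isCoprime_monicDegreeEq η (d * m)]
  simpa [IsCoprime.pow_left_iff] using! card_pow.symm

end MonicDegreeEq

theorem dvd_of_mul_eq_mul_of_isCoprime {R : Type*} [CommRing R] {g g' a b a' b' : R}
    (hab : IsCoprime a b) (ha : g * a = g' * a') (hb : g * b = g' * b') : g' ∣ g := by
  obtain ⟨u, v, h⟩ := hab
  exact ⟨u * a' + v * b', by linear_combination u * ha + v * hb - g * h⟩

theorem eq_of_mul_eq_mul_of_isCoprime {g g' a b a' b' : F[X]} (hg : g.Monic) (hg' : g'.Monic)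
    (hab : IsCoprime a b) (hab' : IsCoprime a' b') (ha : g * a = g' * a')
    (hb : g * b = g' * b') : g = g' :=
  eq_of_monic_of_associated hg hg' <| associated_of_dvd_dvd
    (dvd_of_mul_eq_mul_of_isCoprime hab' ha.symm hb.symm)
    (dvd_of_mul_eq_mul_of_isCoprime hab ha hb)

theorem exists_monic_mul_isCoprime {f : F[X]} (hf : f ≠ 0) (h : F[X]) :
    ∃ g a b : F[X], g.Monic ∧ IsCoprime a b ∧ f = g * a ∧ h = g * b := by
  classical
  let _ := EuclideanDomain.gcdMonoid F[X]
  obtain ⟨a, b, ha, hb, hab⟩ := extract_gcd f h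
  have gcd_ne_zero : gcd f h ≠ 0 := fun h₀ => hf ((gcd_eq_zero_iff _ _).mp h₀).1
  obtain ⟨u, hu⟩ := normalize_associated (gcd f h)
  refine ⟨normalize (gcd f h), u * a, u * b, monic_normalize gcd_ne_zero, ?_, ?_, ?_⟩
  · rwa [isCoprime_mul_unit_left u.isUnit, ← gcd_isUnit_iff]
  · rwa [← mul_assoc, hu]
  · rwa [← mul_assoc, hu]

/-- Pairs of coprime monic polynomials, both of degree `n`. -/
abbrev CoprimeMonicPairs (F : Type*) [Field F] (n : ℕ) : Type _ :=
  {p : MonicDegreeEq F n × MonicDegreeEq F n // IsCoprime p.1.1 p.2.1}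

section CoprimeMonicPairs

open Finset.HasAntidiagonal

/-- Multiplication of a coprime pair `(a, b)` by a monic `g`, with `deg g + deg a = m`; it recovers
an arbitrary pair of monic polynomials of degree `m` from its monic gcd `g`. -/
noncomputable def scalePair (m : ℕ)
    (x : Σ x : antidiagonal m, MonicDegreeEq F x.1.1 × CoprimeMonicPairs F x.1.2) :
    MonicDegreeEq F m × MonicDegreeEq F m :=
  have hm := mem_antidiagonal.mp x.1.2
  let ⟨_, g, p⟩ := x
  (.mk (g.1 * p.1.1.1) (g.monic.mul p.1.1.monic) (by
      rw [g.monic.natDegree_mul p.1.1.monic, g.natDegree, p.1.1.natDegree, hm]),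
    .mk (g.1 * p.1.2.1) (g.monic.mul p.1.2.monic) (by
      rw [g.monic.natDegree_mul p.1.2.monic, g.natDegree, p.1.2.natDegree, hm]))

theorem scalePair_bijective (m : ℕ) : Function.Bijective (scalePair (F := F) m) := by
  constructor
  · rintro ⟨⟨⟨i, j⟩, hij⟩, g, ⟨⟨a, b⟩, hab⟩⟩ ⟨⟨⟨i', j'⟩, hij'⟩, g', ⟨⟨a', b'⟩, hab'⟩⟩ h
    have h₁ : g.1 * a.1 = g'.1 * a'.1 := congrArg (fun p => p.1.1) h
    have h₂ : g.1 * b.1 = g'.1 * b'.1 := congrArg (fun p => p.2.1) h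
    have hg : g.1 = g'.1 := eq_of_mul_eq_mul_of_isCoprime g.monic g'.monic hab hab' h₁ h₂
    obtain rfl : i = i' := by simpa using congrArg natDegree hg
    obtain rfl : j = j' := by
      rw [mem_antidiagonal] at hij hij'
      lia
    obtain rfl : g = g' := Subtype.ext hg
    obtain rfl : a = a' := Subtype.ext (mul_left_cancel₀ g.monic.ne_zero h₁)
    obtain rfl : b = b' := Subtype.ext (mul_left_cancel₀ g.monic.ne_zero h₂)
    rfl
  · rintro ⟨f, h⟩
    obtain ⟨g, a, b, hg, hab, hf, hh⟩ := exists_monic_mul_isCoprime f.monic.ne_zero h.1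
    have ha : a.Monic := hg.of_mul_monic_left (hf ▸ f.monic)
    have hb : b.Monic := hg.of_mul_monic_left (hh ▸ h.monic)
    have hga : g.natDegree + a.natDegree = m := by
      rw [← hg.natDegree_mul ha, ← hf, f.natDegree]
    have hgb : g.natDegree + b.natDegree = m := by
      rw [← hg.natDegree_mul hb, ← hh, h.natDegree]
    exact ⟨⟨⟨(g.natDegree, a.natDegree), mem_antidiagonal.mpr hga⟩, .mk g hg rfl,
      ⟨(.mk a ha rfl, .mk b hb (by lia)), hab⟩⟩,
      Prod.ext (Subtype.ext hf.symm) (Subtype.ext hh.symm)⟩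

theorem sum_card_coprimeMonicPairs [Finite F] (m : ℕ) :
    ∑ x ∈ antidiagonal m, Nat.card F ^ x.1 * Nat.card (CoprimeMonicPairs F x.2) =
      Nat.card F ^ (2 * m) := by
  have h := Nat.card_congr (Equiv.ofBijective _ (scalePair_bijective (F := F) m))
  simp only [Nat.card_sigma, Nat.card_prod, card_monicDegreeEq, ← pow_add, ← two_mul] at h
  rw [← h, ← Finset.sum_coe_sort]

theorem card_coprimeMonicPairs_succ [Finite F] (m : ℕ) :
    Nat.card (CoprimeMonicPairs F (m + 1)) = Nat.card Fˣ * Nat.card F ^ (2 * m + 1) := by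
  have recurrence : Nat.card (CoprimeMonicPairs F (m + 1)) + Nat.card F ^ (2 * m + 1) =
      Nat.card F * Nat.card F ^ (2 * m + 1) := by
    have h := sum_card_coprimeMonicPairs (F := F) (m + 1)
    simp only [Finset.Nat.sum_antidiagonal_succ, pow_zero, one_mul, pow_succ', mul_assoc,
      ← Finset.mul_sum, sum_card_coprimeMonicPairs m] at h
    rw [← pow_succ'] at h
    rw [h]
    ring
  rw [Nat.card_units, Nat.sub_mul, one_mul]
  lia

end CoprimeMonicPairs

theorem sum_card_units_adjoinRoot [Finite F] (m : ℕ) [Fintype (MonicDegreeEq F m)] :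
    ∑ η : MonicDegreeEq F m, Nat.card (AdjoinRoot η.1)ˣ = Nat.card (CoprimeMonicPairs F m) := by
  rw [CoprimeMonicPairs, Nat.card_congr (Equiv.subtypeProdEquivSigmaSubtype
    fun f g : MonicDegreeEq F m => IsCoprime f.1 g.1), Nat.card_sigma]
  exact Finset.sum_congr rfl fun η _ => by simpa using (card_isCoprime_monicDegreeEq η 0).symm

theorem eq_of_monic_of_pow_eq_pow {η η' : F[X]} {d : ℕ} (hd : d ≠ 0) (hη : η.Monic)
    (hη' : η'.Monic) (h : η ^ d = η' ^ d) : η = η' :=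
  eq_of_monic_of_associated hη hη' <| associated_of_dvd_dvd
    ((UniqueFactorizationMonoid.pow_dvd_pow_iff_dvd hd).mp h.dvd)
    ((UniqueFactorizationMonoid.pow_dvd_pow_iff_dvd hd).mp h.symm.dvd)

open Classical in
theorem sum_monic_pow {M : Type*} [AddCommMonoid M] {d m : ℕ} (hd : d ≠ 0)
    [Fintype (MonicDegreeEq F m)] [Fintype (MonicDegreeEq F (d * m))] (w : F[X] → M) :
    ∑ φ : MonicDegreeEq F (d * m) with ∃ η : F[X], η.Monic ∧ η ^ d = φ.1, w φ.1 =
      ∑ η : MonicDegreeEq F m, w (η.1 ^ d) := by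
  symm
  refine Finset.sum_bij (fun η _ => .mk (η.1 ^ d) (η.monic.pow d)
    (by rw [η.monic.natDegree_pow, η.natDegree])) ?_ ?_ ?_ fun _ _ => rfl
  · intro η _
    simpa using ⟨η.1, η.monic, rfl⟩
  · intro η _ η' _ h
    exact Subtype.ext
      (eq_of_monic_of_pow_eq_pow hd η.monic η'.monic (congrArg Subtype.val h))
  · intro φ hφ
    obtain ⟨η, hη, hφ_eq⟩ := (Finset.mem_filter.mp hφ).2
    have hdeg : η.natDegree = m := by
      apply Nat.eq_of_mul_eq_mul_left (Nat.pos_of_ne_zero hd)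
      rw [← hη.natDegree_pow, hφ_eq, φ.natDegree]
    exact ⟨.mk η hη hdeg, Finset.mem_univ _, Subtype.ext hφ_eq⟩

open Classical in
theorem sum_card_units_adjoinRoot_monic_pow [Finite F] {n d : ℕ} (hn : n ≠ 0) (hd : d ∣ n)
    [Fintype (MonicDegreeEq F n)] :
    ∑ φ : MonicDegreeEq F n with ∃ η : F[X], η.Monic ∧ η ^ d = φ.1,
      Nat.card (AdjoinRoot φ.1)ˣ = Nat.card Fˣ * Nat.card F ^ (n + (n / d - 1)) := by
  obtain ⟨m, rfl⟩ := hd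
  obtain ⟨hd₀, hm₀⟩ := mul_ne_zero_iff.mp hn
  have := Fintype.ofFinite (MonicDegreeEq F m)
  rw [sum_monic_pow hd₀ fun φ => Nat.card (AdjoinRoot φ)ˣ, Nat.mul_div_cancel_left m (by lia)]
  obtain ⟨d, rfl⟩ := Nat.exists_eq_succ_of_ne_zero hd₀
  obtain ⟨m, rfl⟩ := Nat.exists_eq_succ_of_ne_zero hm₀
  simp only [Nat.succ_eq_add_one, card_units_adjoinRoot_pow_succ, ← Finset.sum_mul,
    sum_card_units_adjoinRoot, card_coprimeMonicPairs_succ]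
  rw [mul_assoc, ← pow_add]
  congr 2
  lia

theorem card_norm_adjoinRoot_eq_one (hφ : φ.Monic) :
    Nat.card {x : AdjoinRoot φ // Algebra.norm F x = 1} = Nat.card (normUnits φ).ker := by
  have := hφ.free_adjoinRoot
  have := hφ.finite_adjoinRoot
  symm
  refine Nat.card_eq_of_bijective
    (fun u => (⟨u.1, congrArg Units.val (MonoidHom.mem_ker.mp u.2)⟩ :
      {x : AdjoinRoot φ // Algebra.norm F x = 1})) ⟨?_, ?_⟩
  · intro u v h
    exact Subtype.ext (Units.ext (congrArg Subtype.val h))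
  · rintro ⟨x, hx⟩
    obtain ⟨u, rfl⟩ : IsUnit x := isUnit_algebraNorm_iff.mp (hx ▸ isUnit_one)
    exact ⟨⟨u, MonoidHom.mem_ker.mpr (Units.ext hx)⟩, rfl⟩

/-- The set `ResPairs F n`, fibred over the first component of a pair. -/
noncomputable def resPairsEquivSigma (F : Type*) [Field F] (n : ℕ) :
    ResPairs F n ≃ Σ φ : MonicDegreeEq F n,
      {ψ : MonicDegreeEq F n // Algebra.norm F (AdjoinRoot.mk φ.1 ψ.1) = 1} where
  toFun x :=
    ⟨.mk x.1.1 x.2.1 x.2.2.1, .mk x.1.2 x.2.2.2.1 x.2.2.2.2.1,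
      (resultantAC_eq_one_iff x.2.1).mp x.2.2.2.2.2⟩
  invFun x :=
    ⟨(x.1.1, x.2.1.1), x.1.monic, x.1.natDegree, x.2.1.monic, x.2.1.natDegree,
      (resultantAC_eq_one_iff x.1.monic).mpr x.2.2⟩
  left_inv _ := rfl
  right_inv _ := rfl

theorem card_resPairs_eq_sum_card_ker (n : ℕ) [Finite F] [Fintype (MonicDegreeEq F n)] :
    Nat.card (ResPairs F n) = ∑ φ : MonicDegreeEq F n, Nat.card (normUnits φ.1).ker := by
  rw [Nat.card_congr (resPairsEquivSigma F n), Nat.card_sigma]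
  refine Finset.sum_congr rfl fun φ _ => ?_
  rw [← card_norm_adjoinRoot_eq_one φ.monic]
  simpa using card_monicDegreeEq_mk φ 0 fun x => Algebra.norm F x = 1

theorem card_resPairs [Finite F] {n : ℕ} (hn : n ≠ 0) :
    Nat.card (ResPairs F n) = ∑ d ∈ (n.gcd (Nat.card Fˣ)).divisors,
      d.totient * Nat.card F ^ (n + (n / d - 1)) := by
  classical
  have := Fintype.ofFinite (MonicDegreeEq F n)
  apply mul_left_cancel₀ (Nat.card_pos (α := Fˣ)).ne'
  calc Nat.card Fˣ * Nat.card (ResPairs F n)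
    _ = ∑ φ : MonicDegreeEq F n, ∑ d ∈ (n.gcd (Nat.card Fˣ)).divisors with
          ∃ η : F[X], η.Monic ∧ η ^ d = φ.1, d.totient * Nat.card (AdjoinRoot φ.1)ˣ := by
      rw [card_resPairs_eq_sum_card_ker, Finset.mul_sum]
      exact Finset.sum_congr rfl fun φ _ => by
        rw [card_units_mul_card_ker_normUnits φ.monic, φ.natDegree]
    _ = ∑ d ∈ (n.gcd (Nat.card Fˣ)).divisors, d.totient *
          ∑ φ : MonicDegreeEq F n with ∃ η : F[X], η.Monic ∧ η ^ d = φ.1,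
            Nat.card (AdjoinRoot φ.1)ˣ := by
      simp only [Finset.mul_sum, Finset.sum_filter, mul_ite, mul_zero]
      exact Finset.sum_comm
    _ = ∑ d ∈ (n.gcd (Nat.card Fˣ)).divisors,
          d.totient * (Nat.card Fˣ * Nat.card F ^ (n + (n / d - 1))) := by
      refine Finset.sum_congr rfl fun d hd => ?_
      rw [sum_card_units_adjoinRoot_monic_pow hn
        ((Nat.dvd_of_mem_divisors hd).trans (Nat.gcd_dvd_left _ _))]
    _ = _ := by
      rw [Finset.mul_sum]
      exact Finset.sum_congr rfl fun d _ => mul_left_comm _ _ _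

end

theorem divisors_filter_dvd_eq_divisors_gcd {c : ℕ} (hc : c ≠ 0) (Q : ℕ) :
    c.divisors.filter (· ∣ Q) = (c.gcd Q).divisors := by
  ext d
  simp [Nat.dvd_gcd_iff, hc]

theorem sum_moebius_mul_gcd {R : Type*} [CommRing R] {n : ℕ} (hn : n ≠ 0) (f : ℕ → R) (Q : ℕ) :
    ∑ x ∈ n.divisorsAntidiagonal, ∑ y ∈ x.2.divisorsAntidiagonal,
        (ArithmeticFunction.moebius x.1 : R) * f y.1 * (y.2.gcd Q : R) =
      ∑ d ∈ (n.gcd Q).divisors, (d.totient : R) * f (n / d) := by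
  let B : ArithmeticFunction R := ⟨fun b => if b = 0 then 0 else f b, by simp⟩
  let G : ArithmeticFunction R := ⟨fun c => if c = 0 then 0 else c.gcd Q, by simp⟩
  let T : ArithmeticFunction R := ⟨fun d => if d ∣ Q then d.totient else 0, by simp⟩
  have zeta_mul_T : (ArithmeticFunction.zeta : ArithmeticFunction R) * T = G := by
    ext c
    rw [ArithmeticFunction.coe_zeta_mul_apply]
    obtain rfl | hc := eq_or_ne c 0
    · simp
    · simp only [T, G, ArithmeticFunction.coe_mk, hc, if_false]
      rw [← Finset.sum_filter, divisors_filter_dvd_eq_divisors_gcd hc, ← Nat.cast_sum,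
        Nat.sum_totient]
  have inversion : (ArithmeticFunction.moebius : ArithmeticFunction R) * (B * G) = T * B := by
    rw [← zeta_mul_T, mul_left_comm,
      ← mul_assoc (ArithmeticFunction.moebius : ArithmeticFunction R),
      ArithmeticFunction.coe_moebius_mul_coe_zeta, one_mul, mul_comm]
  calc _ = ((ArithmeticFunction.moebius : ArithmeticFunction R) * (B * G)) n := by
        simp only [ArithmeticFunction.mul_apply, Finset.mul_sum]
        refine Finset.sum_congr rfl fun x _ => Finset.sum_congr rfl fun y hy => ?_
        obtain ⟨h₁, h₂⟩ := Nat.ne_zero_of_mem_divisorsAntidiagonal hy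
        simp [B, G, h₁, h₂, mul_assoc]
    _ = ∑ d ∈ n.divisors with d ∣ Q, (d.totient : R) * f (n / d) := by
        rw [inversion, ArithmeticFunction.mul_apply,
          Nat.sum_divisorsAntidiagonal (f := fun d b => T d * B b), Finset.sum_filter]
        refine Finset.sum_congr rfl fun d hd => ?_
        have : n / d ≠ 0 := (Nat.div_pos (Nat.divisor_le hd) (Nat.pos_of_mem_divisors hd)).ne'
        simp [T, B, this]
    _ = _ := by rw [divisors_filter_dvd_eq_divisors_gcd hn]

/-- `|Res_n(F_q)| = qⁿ · Σ_{abc = n} μ(a) · q^{b-1} · gcd(c, q-1)`. -/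
theorem stmt_1 (F : Type*) [Field F] [Fintype F] (q : ℕ) (hq : Fintype.card F = q)
    (n : ℕ) (hn : 1 ≤ n) :
    (Nat.card (ResPairs F n) : ℤ) =
      (q : ℤ) ^ n *
        ∑ x ∈ n.divisorsAntidiagonal, ∑ y ∈ x.2.divisorsAntidiagonal,
          (ArithmeticFunction.moebius x.1) * (q : ℤ) ^ (y.1 - 1) *
            (Nat.gcd y.2 (q - 1) : ℤ) := by
  have hn₀ : n ≠ 0 := Nat.one_le_iff_ne_zero.mp hn
  have moebius_inversion := sum_moebius_mul_gcd hn₀ (fun b => (q : ℤ) ^ (b - 1)) (q - 1)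
  simp only [Int.cast_id] at moebius_inversion
  rw [card_resPairs hn₀, Nat.card_units, Nat.card_eq_fintype_card, hq, moebius_inversion,
    Finset.mul_sum]
  push_cast
  exact Finset.sum_congr rfl fun d _ => by rw [pow_add, mul_left_comm]
end

section
/- For every integer n ≥ 1 and every prime power q, the cardinality of Res_n(F_q) equals q^n · Σ (q−1)^{r−1} · gcd(q−1, n_1, …, n_r), where the sum ranges over all integers 1 ≤ r ≤ n and all ordered r-tuples (n_1, …, n_r) of positive integers with n_1 + ⋯ + n_r = n. -/
open Polynomial

/-!
For a multiplicative character `χ` of `F_q` let `Sₙ` be the sum of `χ (Res(φ, ψ))` over all pairs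
of monic polynomials of degree `n`. Dividing `ψ` by `φ` replaces `ψ` by its remainder, which is `0`
or `b • σ` with `b` a unit and `σ` monic of degree `m < n`, and `Res(φ, b • σ) = bⁿ Res(φ, σ)`.
By reciprocity `Res(φ, σ) = (-1) ^ (n * m) Res(σ, φ)`, and now `φ` may be divided by `σ`. Hence
`Sₙ = (∑ b, χ b ^ n) * ∑ m < n, χ (-1) ^ (n * m) * q ^ (n - m) * Sₘ` for `n > 0`.

The sum over `b` vanishes unless `χ ^ n = 1`, and in that case the signs are trivial; applied to
`Sₘ` this shows that only those `m` with `χ ^ m = 1` contribute. So `S` satisfies the renewal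
equation `S = 1 + S * W` with `Wᵢ = (q - 1) * q ^ i` if `i > 0` and `χ ^ i = 1`, and `Wᵢ = 0`
otherwise. Expanding `S = ∑ W ^ r` writes `Sₙ` as a sum over the compositions of `n` all of whose
parts, equivalently whose gcd, kill `χ`. Summing over `χ`, orthogonality isolates the pairs with
`Res(φ, ψ) = 1` on one side, and the characters killed by `d` number `gcd(q - 1, d)` on the other.
-/

open Finset
open scoped PowerSeries

section PowerSeries

variable {R : Type*} [CommSemiring R]

theorem coeff_pow_eq_sum_antidiagonalTuple (f : R⟦X⟧) (r n : ℕ) :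
    PowerSeries.coeff n (f ^ r) =
      ∑ k ∈ Nat.antidiagonalTuple r n, ∏ i, PowerSeries.coeff (k i) f := by
  have hprod : f ^ r = ∏ _i : Fin r, f := by simp
  rw [hprod, PowerSeries.coeff_prod]
  exact sum_equiv Finsupp.equivFunOnFinite (by simp [Nat.mem_antidiagonalTuple]) (by simp)

theorem eq_geom_sum_add_mul_pow {S W : R} (h : S = 1 + S * W) (n : ℕ) :
    S = ∑ r ∈ range n, W ^ r + S * W ^ n := by
  induction n with
  | zero => simp
  | succ n ih =>
    calc S = ∑ r ∈ range n, W ^ r + (1 + S * W) * W ^ n := by rw [← h, ← ih]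
      _ = ∑ r ∈ range (n + 1), W ^ r + S * W ^ (n + 1) := by rw [sum_range_succ]; ring

theorem coeff_eq_sum_coeff_pow_of_eq_one_add_mul {S W : R⟦X⟧}
    (hW : PowerSeries.constantCoeff W = 0) (h : S = 1 + S * W) (n : ℕ) :
    PowerSeries.coeff n S = ∑ r ∈ range (n + 1), PowerSeries.coeff n (W ^ r) := by
  have hdvd : PowerSeries.X ^ (n + 1) ∣ S * W ^ (n + 1) :=
    (pow_dvd_pow_of_dvd (PowerSeries.X_dvd_iff.2 hW) _).mul_left S
  conv_lhs => rw [eq_geom_sum_add_mul_pow h (n + 1)]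
  rw [map_add, PowerSeries.X_pow_dvd_iff.1 hdvd n n.lt_succ_self, add_zero, map_sum]

end PowerSeries

theorem forall_pow_eq_one_iff_pow_gcd_eq_one {G ι : Type*} [Monoid G] (x : G) (s : Finset ι)
    (k : ι → ℕ) : (∀ i ∈ s, x ^ k i = 1) ↔ x ^ s.gcd k = 1 := by
  simp only [← orderOf_dvd_iff_pow_eq_one, Finset.dvd_gcd_iff]

section MulChar

variable {M R : Type*} [CommMonoid M] [CommRing R] [IsDomain R]

open scoped Classical in
theorem sum_units_mulChar_pow [Fintype Mˣ] (χ : MulChar M R) (n : ℕ) :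
    ∑ b : Mˣ, χ b ^ n = if χ ^ n = 1 then (Nat.card Mˣ : R) else 0 := by
  have happ (b : Mˣ) : (Units.coeHom R).comp (χ ^ n).toUnitHom b = χ b ^ n :=
    (MulChar.coe_toUnitHom _ _).trans (MulChar.pow_apply_coe _ _ _)
  have hone : (Units.coeHom R).comp (χ ^ n).toUnitHom = 1 ↔ χ ^ n = 1 := by
    simp [MonoidHom.ext_iff, MulChar.eq_one_iff]
  simp only [← happ, sum_hom_units, hone, Nat.card_eq_fintype_card, Nat.cast_ite, Nat.cast_zero]

variable [Finite M] [HasEnoughRootsOfUnity R (Monoid.exponent Mˣ)] [Fintype (MulChar M R)]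

open scoped Classical in
theorem sum_mulChar_apply (a : M) :
    ∑ χ : MulChar M R, χ a = if a = 1 then (Nat.card Mˣ : R) else 0 := by
  split_ifs with ha
  · simp [ha, ← MulChar.card_eq_card_units_of_hasEnoughRootsOfUnity M R]
  · obtain ⟨χ, hχ⟩ := MulChar.exists_apply_ne_one_of_hasEnoughRootsOfUnity M R ha
    refine eq_zero_of_mul_eq_self_left hχ ?_
    simp only [mul_sum, ← MulChar.mul_apply]
    exact (Group.mulLeft_bijective χ).sum_comp fun χ' ↦ χ' a

open scoped Classical in
variable (M R) in
theorem card_mulChar_pow_eq_one [IsCyclic Mˣ] (d : ℕ) :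
    #{χ : MulChar M R | χ ^ d = 1} = (Nat.card Mˣ).gcd d := by
  obtain ⟨e⟩ := MulChar.mulEquiv_units M R
  have : IsCyclic (MulChar M R) := isCyclic_of_surjective e.symm e.symm.surjective
  rw [← Nat.card_congr e.toEquiv, ← IsCyclic.card_powMonoidHom_ker, ← Fintype.card_subtype,
    ← Nat.card_eq_fintype_card]
  rfl

end MulChar

section Resultant

variable {R : Type*} [CommRing R]

theorem resultant_natDegree_of_natDegree_le {f g : R[X]} (hf : f.Monic) {n : ℕ}
    (hg : g.natDegree ≤ n) :
    resultant f g f.natDegree n = resultant f g := by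
  obtain ⟨k, rfl⟩ := exists_add_of_le hg
  rw [resultant_add_right_deg _ _ _ _ _ le_rfl, hf.coeff_natDegree, one_pow, one_mul]

theorem resultant_modByMonic {f : R[X]} (hf : f.Monic) (g : R[X]) :
    resultant f (g %ₘ f) = resultant f g := by
  obtain ⟨n, hn⟩ : ∃ n, n = (g /ₘ f).natDegree + f.natDegree + g.natDegree := ⟨_, rfl⟩
  rw [← resultant_natDegree_of_natDegree_le hf (show (g %ₘ f).natDegree ≤ n by
      have := natDegree_modByMonic_le g hf; omega),
    ← resultant_natDegree_of_natDegree_le hf (show g.natDegree ≤ n by omega),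
    ← resultant_add_mul_right f (g %ₘ f) (g /ₘ f) _ _ (by omega) le_rfl, modByMonic_add_div]

theorem resultant_C_mul_of_monic {f : R[X]} (hf : f.Monic) (b : R) (g : R[X]) :
    resultant f (C b * g) = b ^ f.natDegree * resultant f g := by
  rw [← resultant_natDegree_of_natDegree_le hf (natDegree_C_mul_le b g), resultant_C_mul_right]

end Resultant

section FinitePolynomials

variable {R : Type*} [Ring R] [Finite R]

theorem finite_setOf_degree_lt (n : ℕ) : {p : R[X] | p.degree < n}.Finite := by
  have : Finite (degreeLT R n) := .of_equiv _ (degreeLTEquiv R n).toEquiv.symm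
  exact (Set.toFinite (degreeLT R n : Set R[X])).subset fun _ ↦ mem_degreeLT.2

theorem finite_setOf_monic_natDegree_eq (n : ℕ) : {p : R[X] | p.Monic ∧ p.natDegree = n}.Finite :=
  (finite_setOf_degree_lt (n + 1)).subset fun p hp ↦
    degree_le_natDegree.trans_lt (by rw [hp.2]; exact_mod_cast n.lt_succ_self)

variable (R) in
/-- The polynomials of degree less than `n` over a finite ring, as a finite set; `0` belongs to
it, also for `n = 0`. -/
noncomputable def polysDegreeLT (n : ℕ) : Finset R[X] := (finite_setOf_degree_lt n).toFinset

variable (R) in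
/-- The monic polynomials of degree `n` over a finite ring, as a finite set. -/
noncomputable def monicsOfDegree (n : ℕ) : Finset R[X] :=
  (finite_setOf_monic_natDegree_eq n).toFinset

@[simp]
theorem mem_polysDegreeLT {n : ℕ} {p : R[X]} : p ∈ polysDegreeLT R n ↔ p.degree < n := by
  simp [polysDegreeLT]

@[simp]
theorem mem_monicsOfDegree {n : ℕ} {p : R[X]} :
    p ∈ monicsOfDegree R n ↔ p.Monic ∧ p.natDegree = n := by
  simp [monicsOfDegree]

variable (R) in
theorem monicsOfDegree_zero : monicsOfDegree R 0 = {1} := by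
  ext p
  rw [mem_monicsOfDegree, mem_singleton]
  exact ⟨fun h ↦ h.1.natDegree_eq_zero.1 h.2, by rintro rfl; simp⟩

variable (R) in
theorem card_monicsOfDegree [Nontrivial R] (n : ℕ) : #(monicsOfDegree R n) = Nat.card R ^ n := by
  have h : Nat.card {p : R[X] // p.Monic ∧ p.natDegree = n} = Nat.card R ^ n := by
    rw [Nat.card_congr ((monicEquivDegreeLT n).trans (degreeLTEquiv R n).toEquiv), Nat.card_fun,
      Nat.card_fin]
  rw [← h]
  exact (Nat.card_eq_card_finite_toFinset _).symm

end FinitePolynomials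

theorem sum_monicsOfDegree_modByMonic {R M : Type*} [CommRing R] [Finite R] [Nontrivial R]
    [AddCommMonoid M] {σ : R[X]} (hσ : σ.Monic) (k : ℕ) (g : R[X] → M) :
    ∑ φ ∈ monicsOfDegree R (k + σ.natDegree), g (φ %ₘ σ) =
      Nat.card R ^ k • ∑ τ ∈ polysDegreeLT R σ.natDegree, g τ := by
  have key : ∑ φ ∈ monicsOfDegree R (k + σ.natDegree), g (φ %ₘ σ) =
      ∑ x ∈ monicsOfDegree R k ×ˢ polysDegreeLT R σ.natDegree, g x.2 := by
    refine sum_nbij' (fun φ ↦ (φ /ₘ σ, φ %ₘ σ)) (fun x ↦ x.2 + σ * x.1) ?_ ?_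
      (fun φ _ ↦ modByMonic_add_div φ σ) ?_ (fun _ _ ↦ rfl)
    · intro φ hφ
      obtain ⟨hφ, hdeg⟩ := mem_monicsOfDegree.1 hφ
      have hle : σ.degree ≤ φ.degree := by
        rw [degree_eq_natDegree hφ.ne_zero, degree_eq_natDegree hσ.ne_zero, hdeg]
        exact_mod_cast Nat.le_add_left _ _
      simp only [mem_product, mem_monicsOfDegree, mem_polysDegreeLT]
      refine ⟨⟨?_, ?_⟩, ?_⟩
      · rw [Monic, leadingCoeff_divByMonic_of_monic hσ hle, hφ]
      · rw [natDegree_divByMonic _ hσ, hdeg, Nat.add_sub_cancel]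
      · rw [← degree_eq_natDegree hσ.ne_zero]
        exact degree_modByMonic_lt _ hσ
    · rintro ⟨κ, τ⟩ hx
      simp only [mem_product, mem_monicsOfDegree, mem_polysDegreeLT,
        ← degree_eq_natDegree hσ.ne_zero] at hx
      obtain ⟨⟨hκ, rfl⟩, hτ⟩ := hx
      have hlt : τ.degree < (σ * κ).degree := hτ.trans_le <| by
        rw [degree_eq_natDegree hσ.ne_zero, degree_eq_natDegree (hσ.mul hκ).ne_zero,
          hσ.natDegree_mul hκ]
        exact_mod_cast Nat.le_add_right _ _
      refine mem_monicsOfDegree.2 ⟨(hσ.mul hκ).add_of_right hlt, ?_⟩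
      rw [natDegree_add_eq_right_of_degree_lt hlt, hσ.natDegree_mul hκ, add_comm]
    · rintro ⟨κ, τ⟩ hx
      simp only [mem_product, mem_monicsOfDegree, mem_polysDegreeLT,
        ← degree_eq_natDegree hσ.ne_zero] at hx
      obtain ⟨hdiv, hmod⟩ := div_modByMonic_unique κ τ hσ ⟨rfl, hx.2⟩
      exact Prod.ext hdiv hmod
  simp only [key, sum_product, sum_const, card_monicsOfDegree]

section FiniteField

open scoped Classical in
theorem mem_polysDegreeLT_succ_sdiff {R : Type*} [Ring R] [Finite R] {n : ℕ} {p : R[X]} :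
    p ∈ polysDegreeLT R (n + 1) \ polysDegreeLT R n ↔ p.degree = n := by
  rcases eq_or_ne p 0 with rfl | hp
  · simp
  · rw [mem_sdiff, mem_polysDegreeLT, mem_polysDegreeLT, degree_eq_natDegree hp]
    norm_cast
    omega

variable {F : Type*} [Field F] [Finite F] [Fintype Fˣ]

open scoped Classical in
theorem sum_polysDegreeLT_succ_sdiff {M : Type*} [AddCommMonoid M] (n : ℕ) (g : F[X] → M) :
    ∑ ρ ∈ polysDegreeLT F (n + 1) \ polysDegreeLT F n, g ρ =
      ∑ σ ∈ monicsOfDegree F n, ∑ b : Fˣ, g (C (b : F) * σ) := by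
  rw [← sum_product']
  symm
  refine sum_bij (fun x _ ↦ C (x.2 : F) * x.1) ?_ ?_ ?_ (fun _ _ ↦ rfl)
  · rintro ⟨σ, b⟩ hx
    obtain ⟨hσ, rfl⟩ := mem_monicsOfDegree.1 (mem_product.1 hx).1
    rw [mem_polysDegreeLT_succ_sdiff, degree_C_mul b.ne_zero, degree_eq_natDegree hσ.ne_zero]
  · rintro ⟨σ, b⟩ hx ⟨σ', b'⟩ hx' h
    have hσ := (mem_monicsOfDegree.1 (mem_product.1 hx).1).1
    have hσ' := (mem_monicsOfDegree.1 (mem_product.1 hx').1).1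
    have hb : b = b' := by
      ext
      simpa [hσ.leadingCoeff, hσ'.leadingCoeff] using congrArg leadingCoeff h
    subst hb
    simpa using h
  · intro ρ hρ
    have hdeg := mem_polysDegreeLT_succ_sdiff.1 hρ
    have hρ0 : ρ ≠ 0 := by rintro rfl; simp at hdeg
    have hlc := leadingCoeff_ne_zero.2 hρ0
    refine ⟨(ρ * C ρ.leadingCoeff⁻¹, Units.mk0 _ hlc), ?_, ?_⟩
    · simp only [mem_product, mem_monicsOfDegree, mem_univ, and_true]
      exact ⟨monic_mul_leadingCoeff_inv hρ0,
        (natDegree_mul_leadingCoeff_inv _ hρ0).trans (natDegree_eq_of_degree_eq_some hdeg)⟩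
    · rw [Units.val_mk0, mul_left_comm, ← C_mul, mul_inv_cancel₀ hlc, C_1, mul_one]

theorem sum_polysDegreeLT_eq {M : Type*} [AddCommMonoid M] (n : ℕ) (g : F[X] → M) :
    ∑ ρ ∈ polysDegreeLT F n, g ρ =
      g 0 + ∑ m ∈ range n, ∑ σ ∈ monicsOfDegree F m, ∑ b : Fˣ, g (C (b : F) * σ) := by
  induction n with
  | zero =>
    have h : polysDegreeLT F 0 = {0} := by ext; simp
    simp [h]
  | succ n ih =>
    classical
    have hsub : polysDegreeLT F n ⊆ polysDegreeLT F (n + 1) := fun ρ hρ ↦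
      mem_polysDegreeLT.2 ((mem_polysDegreeLT.1 hρ).trans (by exact_mod_cast n.lt_succ_self))
    rw [← sum_sdiff hsub, sum_polysDegreeLT_succ_sdiff, ih, sum_range_succ, add_comm, add_assoc]

end FiniteField

section Renewal

variable {M R : Type*} [CommMonoid M] [CommRing R]

open scoped Classical in
/-- The series `∑ (q - 1) qⁱ Xⁱ`, where `i` runs over the positive exponents that kill `χ` and `q`
is the order of `M` (for `M` a finite field, which has `q - 1` units). These are the weights of the
renewal equation for the character sums `resultantCharSum χ n n`. -/
noncomputable def renewalSeries (χ : MulChar M R) : R⟦X⟧ :=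
  PowerSeries.mk fun i ↦ if i ≠ 0 ∧ χ ^ i = 1 then (Nat.card Mˣ : R) * (Nat.card M : R) ^ i else 0

theorem constantCoeff_renewalSeries (χ : MulChar M R) :
    PowerSeries.constantCoeff (renewalSeries χ) = 0 := by
  simp [renewalSeries, ← PowerSeries.coeff_zero_eq_constantCoeff_apply]

open scoped Classical in
theorem prod_coeff_renewalSeries (χ : MulChar M R) {r : ℕ} (k : Fin r → ℕ) :
    ∏ i, PowerSeries.coeff (k i) (renewalSeries χ) =
      if (∀ i, 1 ≤ k i) ∧ χ ^ univ.gcd k = 1 then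
        (Nat.card Mˣ : R) ^ r * (Nat.card M : R) ^ (∑ i, k i) else 0 := by
  simp only [← forall_pow_eq_one_iff_pow_gcd_eq_one, mem_univ, forall_const, ← forall_and,
    Nat.one_le_iff_ne_zero, renewalSeries, PowerSeries.coeff_mk, prod_ite_zero, prod_mul_distrib,
    prod_const, card_fin, prod_pow_eq_pow_sum]

end Renewal

section CharacterSum

/-- The character sum `∑ χ (Res(φ, ψ))` over all pairs of monic polynomials of degrees `m`
and `n`. -/
noncomputable def resultantCharSum {R S : Type*} [CommRing R] [Finite R] [CommRing S]
    (χ : MulChar R S) (m n : ℕ) : S :=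
  ∑ φ ∈ monicsOfDegree R m, ∑ ψ ∈ monicsOfDegree R n, χ (resultant φ ψ)

variable {A R : Type*} [CommRing A] [Finite A] [CommRing R]

theorem resultantCharSum_swap (χ : MulChar A R) (m n : ℕ) :
    resultantCharSum χ m n = χ (-1) ^ (m * n) * resultantCharSum χ n m := by
  simp only [resultantCharSum, mul_sum]
  rw [sum_comm]
  refine sum_congr rfl fun ψ hψ ↦ sum_congr rfl fun φ hφ ↦ ?_
  rw [resultant_comm, (mem_monicsOfDegree.1 hφ).2, (mem_monicsOfDegree.1 hψ).2, map_mul, map_pow]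

theorem resultantCharSum_zero (χ : MulChar A R) : resultantCharSum χ 0 0 = 1 := by
  simp [resultantCharSum, monicsOfDegree_zero]

variable [Nontrivial A]

theorem sum_monicsOfDegree_resultant {M : Type*} [AddCommMonoid M] {σ : A[X]} (hσ : σ.Monic)
    (k : ℕ) (g : A → M) :
    ∑ φ ∈ monicsOfDegree A (k + σ.natDegree), g (resultant σ φ) =
      Nat.card A ^ k • ∑ τ ∈ polysDegreeLT A σ.natDegree, g (resultant σ τ) := by
  simp only [← sum_monicsOfDegree_modByMonic hσ, resultant_modByMonic hσ]

theorem resultantCharSum_add_right (χ : MulChar A R) (k m : ℕ) :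
    resultantCharSum χ m (k + m) = (Nat.card A : R) ^ k * resultantCharSum χ m m := by
  rw [resultantCharSum, resultantCharSum, mul_sum]
  refine sum_congr rfl fun σ hσ ↦ ?_
  obtain ⟨hmonic, rfl⟩ := mem_monicsOfDegree.1 hσ
  have hdiag := sum_monicsOfDegree_resultant hmonic 0 χ
  rw [zero_add, pow_zero, one_smul] at hdiag
  rw [sum_monicsOfDegree_resultant hmonic k χ, hdiag, nsmul_eq_mul, Nat.cast_pow]

theorem resultantCharSum_add_left {χ : MulChar A R} {k m : ℕ} (hχ : χ ^ (k + m) = 1) :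
    resultantCharSum χ (k + m) m = (Nat.card A : R) ^ k * resultantCharSum χ m m := by
  have hsign : χ (-1) ^ (k + m) = 1 := by
    rw [← Units.coe_neg_one, ← MulChar.pow_apply_coe, hχ, MulChar.one_apply_coe]
  rw [resultantCharSum_swap, resultantCharSum_add_right, pow_mul, hsign, one_pow, one_mul]

variable {F : Type*} [Field F] [Finite F]

theorem resultantCharSum_self [Fintype Fˣ] (χ : MulChar F R) {n : ℕ} (hn : n ≠ 0) :
    resultantCharSum χ n n =
      (∑ b : Fˣ, χ b ^ n) * ∑ m ∈ range n, resultantCharSum χ n m := by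
  have key : ∀ φ ∈ monicsOfDegree F n, ∑ ψ ∈ monicsOfDegree F n, χ (resultant φ ψ) =
      (∑ b : Fˣ, χ b ^ n) * ∑ m ∈ range n, ∑ σ ∈ monicsOfDegree F m, χ (resultant φ σ) := by
    intro φ hφ
    obtain ⟨hmonic, rfl⟩ := mem_monicsOfDegree.1 hφ
    have hmod := sum_monicsOfDegree_resultant hmonic 0 χ
    rw [zero_add, pow_zero, one_smul, sum_polysDegreeLT_eq] at hmod
    rw [hmod, resultant_zero_right, zero_pow hn, zero_mul, MulChar.map_zero, zero_add]
    simp only [resultant_C_mul_of_monic hmonic, map_mul, map_pow, ← sum_mul,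
      mul_sum _ _ (∑ b : Fˣ, χ b ^ _)]
  simp only [resultantCharSum]
  rw [sum_congr rfl key, ← mul_sum, sum_comm]

theorem resultantCharSum_self_eq_zero [IsDomain R] {χ : MulChar F R} {n : ℕ} (hχ : χ ^ n ≠ 1) :
    resultantCharSum χ n n = 0 := by
  have hn : n ≠ 0 := by rintro rfl; exact hχ (pow_zero χ)
  have : Fintype Fˣ := Fintype.ofFinite _
  rw [resultantCharSum_self χ hn, sum_units_mulChar_pow, if_neg hχ, zero_mul]

theorem sum_units_mul_resultantCharSum_add_left [Fintype Fˣ] [IsDomain R] (χ : MulChar F R)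
    {k : ℕ} (hk : k ≠ 0) (m : ℕ) :
    (∑ b : Fˣ, χ b ^ (k + m)) * resultantCharSum χ (k + m) m =
      resultantCharSum χ m m * PowerSeries.coeff k (renewalSeries χ) := by
  rw [sum_units_mulChar_pow, renewalSeries, PowerSeries.coeff_mk]
  by_cases hkm : χ ^ (k + m) = 1
  · rw [resultantCharSum_add_left hkm, if_pos hkm]
    by_cases hm : χ ^ m = 1
    · rw [pow_add, hm, mul_one] at hkm
      rw [if_pos ⟨hk, hkm⟩]
      ring
    · simp [resultantCharSum_self_eq_zero hm]
  · by_cases hm : χ ^ m = 1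
    · rw [pow_add, hm, mul_one] at hkm
      simp [pow_add, hm, hkm]
    · rw [if_neg hkm, resultantCharSum_self_eq_zero hm, zero_mul, zero_mul]

theorem mk_resultantCharSum_eq_one_add_mul [IsDomain R] (χ : MulChar F R) :
    PowerSeries.mk (fun n ↦ resultantCharSum χ n n) =
      1 + PowerSeries.mk (fun n ↦ resultantCharSum χ n n) * renewalSeries χ := by
  ext n
  rw [map_add, PowerSeries.coeff_mul, Nat.sum_antidiagonal_eq_sum_range_succ_mk, sum_range_succ,
    Nat.sub_self, PowerSeries.coeff_zero_eq_constantCoeff_apply (φ := renewalSeries χ),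
    constantCoeff_renewalSeries, mul_zero, add_zero, PowerSeries.coeff_mk, PowerSeries.coeff_one]
  simp only [PowerSeries.coeff_mk]
  split_ifs with hn
  · simp [hn, resultantCharSum_zero]
  · have : Fintype Fˣ := Fintype.ofFinite _
    rw [resultantCharSum_self χ hn, mul_sum, zero_add]
    refine sum_congr rfl fun m hm ↦ ?_
    obtain ⟨k, rfl⟩ := exists_add_of_le (mem_range.1 hm).le
    have hk : k ≠ 0 := by rintro rfl; simp at hm
    rw [Nat.add_sub_cancel_left, add_comm m k, sum_units_mul_resultantCharSum_add_left χ hk]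

end CharacterSum

theorem algebraMap_resultant_eq_resultantAC {k : Type*} [Field k] {φ : k[X]} (hφ : φ.Monic)
    (ψ : k[X]) :
    algebraMap k (AlgebraicClosure k) (resultant φ ψ) = resultantAC φ ψ := by
  have h := resultant_eq_prod_eval (φ.map (algebraMap k (AlgebraicClosure k)))
    (ψ.map (algebraMap k (AlgebraicClosure k))) ψ.natDegree natDegree_map_le
    (IsAlgClosed.splits _)
  rwa [(hφ.map _).leadingCoeff, one_pow, one_mul, natDegree_map, resultant_map_map] at h

section Count

variable {F : Type*} [Field F] [Finite F]

open scoped Classical in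
theorem card_resPairs_eq_sum (n : ℕ) :
    Nat.card (ResPairs F n) =
      ∑ φ ∈ monicsOfDegree F n, ∑ ψ ∈ monicsOfDegree F n, if resultant φ ψ = 1 then 1 else 0 := by
  have hset : ResPairs F n = ({p ∈ monicsOfDegree F n ×ˢ monicsOfDegree F n |
      resultant p.1 p.2 = 1} : Finset (F[X] × F[X])) := by
    ext ⟨φ, ψ⟩
    have hres (hφ : φ.Monic) : resultantAC φ ψ = 1 ↔ resultant φ ψ = 1 := by
      rw [← algebraMap_resultant_eq_resultantAC hφ]
      exact map_eq_one_iff _ (FaithfulSMul.algebraMap_injective F (AlgebraicClosure F))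
    simp only [ResPairs, Set.mem_ofPred_eq, coe_filter, mem_product, mem_monicsOfDegree]
    grind
  rw [hset, Nat.card_coe_set_eq, Set.ncard_coe_finset, card_filter, sum_product]

theorem sum_resultantCharSum_self {R : Type*} [CommRing R] [IsDomain R]
    [HasEnoughRootsOfUnity R (Monoid.exponent Fˣ)] [Fintype (MulChar F R)] (n : ℕ) :
    ∑ χ : MulChar F R, resultantCharSum χ n n = Nat.card Fˣ * Nat.card (ResPairs F n) := by
  classical
  simp only [resultantCharSum]
  rw [sum_comm, card_resPairs_eq_sum, Nat.cast_sum, mul_sum]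
  refine sum_congr rfl fun φ _ ↦ ?_
  rw [sum_comm, Nat.cast_sum, mul_sum]
  refine sum_congr rfl fun ψ _ ↦ ?_
  rw [sum_mulChar_apply, Nat.cast_ite, Nat.cast_one, Nat.cast_zero, mul_ite, mul_one, mul_zero]

open scoped Classical in
theorem resultantCharSum_self_eq_sum {R : Type*} [CommRing R] [IsDomain R] (χ : MulChar F R)
    (n : ℕ) :
    resultantCharSum χ n n =
      ∑ r ∈ range (n + 1), ∑ k ∈ Nat.antidiagonalTuple r n with ∀ i, 1 ≤ k i,
        if χ ^ univ.gcd k = 1 then (Nat.card Fˣ : R) ^ r * (Nat.card F : R) ^ n else 0 := by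
  have h := coeff_eq_sum_coeff_pow_of_eq_one_add_mul (constantCoeff_renewalSeries χ)
    (mk_resultantCharSum_eq_one_add_mul χ) n
  rw [PowerSeries.coeff_mk] at h
  simp only [h, coeff_pow_eq_sum_antidiagonalTuple, prod_coeff_renewalSeries, ite_and, sum_filter]
  refine sum_congr rfl fun r _ ↦ sum_congr rfl fun k hk ↦ ?_
  rw [Nat.mem_antidiagonalTuple.1 hk]

variable (F) in
theorem card_units_mul_card_resPairs (n : ℕ) :
    Nat.card Fˣ * Nat.card (ResPairs F n) =
      Nat.card F ^ n * ∑ r ∈ range (n + 1), ∑ k ∈ Nat.antidiagonalTuple r n with ∀ i, 1 ≤ k i,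
        Nat.card Fˣ ^ r * (Nat.card Fˣ).gcd (univ.gcd k) := by
  classical
  have : Fintype (MulChar F ℂ) := Fintype.ofFinite _
  rw [← Nat.cast_inj (R := ℂ), Nat.cast_mul, ← sum_resultantCharSum_self]
  simp only [resultantCharSum_self_eq_sum]
  rw [sum_comm, Nat.cast_mul, Nat.cast_sum, mul_sum]
  refine sum_congr rfl fun r _ ↦ ?_
  rw [sum_comm, Nat.cast_sum, mul_sum]
  refine sum_congr rfl fun k _ ↦ ?_
  rw [← sum_filter, sum_const, card_mulChar_pow_eq_one]
  simp only [nsmul_eq_mul, Nat.cast_mul, Nat.cast_pow]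
  ring

end Count

/-- `|Res_n(F_q)| = qⁿ · Σ_{r=1}^{n} Σ_{n = n₁ + ⋯ + n_r, nᵢ ≥ 1}
(q-1)^{r-1} · gcd(q-1, n₁, …, n_r)`. -/
theorem stmt_11 (F : Type*) [Field F] [Fintype F] (q : ℕ) (hq : Fintype.card F = q)
    (n : ℕ) (hn : 1 ≤ n) :
    Nat.card (ResPairs F n) =
      q ^ n * ∑ r ∈ Finset.Icc 1 n,
        ∑ f ∈ (Finset.Nat.antidiagonalTuple r n).filter (fun f => ∀ i, 1 ≤ f i),
          (q - 1) ^ (r - 1) * Nat.gcd (q - 1) (Finset.univ.gcd f) := by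
  have hunits : Nat.card Fˣ = q - 1 := by rw [Nat.card_units, Nat.card_eq_fintype_card, hq]
  refine Nat.eq_of_mul_eq_mul_left (Nat.card_pos (α := Fˣ)) ?_
  rw [card_units_mul_card_resPairs, hunits, Nat.card_eq_fintype_card, hq, mul_left_comm]
  congr 1
  obtain ⟨m, rfl⟩ := Nat.exists_eq_succ_of_ne_zero (Nat.one_le_iff_ne_zero.1 hn)
  rw [range_eq_Ico, sum_eq_sum_Ico_succ_bot (Nat.succ_pos _), Nat.antidiagonalTuple_zero_succ,
    filter_empty, sum_empty, zero_add, mul_sum]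
  refine sum_congr rfl fun r hr ↦ ?_
  have hr0 : r ≠ 0 := Nat.one_le_iff_ne_zero.1 (mem_Ico.1 hr).1
  rw [mul_sum]
  refine sum_congr rfl fun f _ ↦ ?_
  rw [← mul_assoc, mul_pow_sub_one hr0]
end
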